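/- Let E be a real inner product space, z ∈ E, γ > 0, and let G : E → ℝ be defined by G(x) = (1/(2γ))·‖x − z‖². Then for every ε ≥ 0 and every x ∈ E: ∂_ε G(x) = { (x − z − r)/γ : r ∈ E, ‖r‖ ≤ √(2γε) }. -/

import Mathlib

open RealInnerProductSpace

/-!
A vector `p` is an `ε`-subgradient of `G` at `x` exactly when `x` minimizes `G - ⟪p, ·⟫` up to `ε`.
For `G w = ‖w - z‖² / (2γ)`, completing the square turns `G - ⟪p, ·⟫` into
`w ↦ ‖w - z - γp‖² / (2γ)` plus a constant. Its minimum is attained at `w = z + γp`, so `p` is an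
`ε`-subgradient at `x` if and only if the residual `r = x - z - γp` satisfies `‖r‖² ≤ 2γε`.
-/

section EpsSubdifferential

variable {E : Type*} [SeminormedAddCommGroup E] [InnerProductSpace ℝ E]

/-- The `ε`-subdifferential `∂_ε G(x)` of convex analysis. Subgradients are vectors of `E`, paired
with displacements by the inner product, rather than continuous linear functionals. -/
def epsSubdifferential (G : E → ℝ) (ε : ℝ) (x : E) : Set E :=
  {p | ∀ w, G w ≥ G x + ⟪p, w - x⟫ - ε}

theorem mem_epsSubdifferential_iff_forall_sub_inner_le {G : E → ℝ} {ε : ℝ} {x p : E} :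
    p ∈ epsSubdifferential G ε x ↔ ∀ w, G x - ⟪p, x⟫ ≤ G w - ⟪p, w⟫ + ε := by
  refine forall_congr' fun w ↦ ?_
  rw [inner_sub_right]
  constructor <;> intro h <;> linarith

theorem quadratic_sub_inner_eq {γ : ℝ} (hγ : γ ≠ 0) (z p w : E) :
    1 / (2 * γ) * ‖w - z‖ ^ 2 - ⟪p, w⟫ =
      1 / (2 * γ) * ‖w - z - γ • p‖ ^ 2 - (⟪p, z⟫ + γ / 2 * ‖p‖ ^ 2) := by
  rw [norm_sub_sq_real (w - z), real_inner_smul_right, real_inner_comm p (w - z), inner_sub_right,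
    norm_smul, mul_pow, Real.norm_eq_abs, sq_abs]
  field_simp
  ring

theorem mem_epsSubdifferential_quadratic_iff {γ : ℝ} (hγ : 0 < γ) {z x p : E} {ε : ℝ} :
    p ∈ epsSubdifferential (fun w ↦ 1 / (2 * γ) * ‖w - z‖ ^ 2) ε x ↔
      ‖x - z - γ • p‖ ^ 2 ≤ 2 * γ * ε := by
  calc
    _ ↔ ∀ w, 1 / (2 * γ) * ‖x - z - γ • p‖ ^ 2 ≤ 1 / (2 * γ) * ‖w - z - γ • p‖ ^ 2 + ε := by
      simp only [mem_epsSubdifferential_iff_forall_sub_inner_le, quadratic_sub_inner_eq hγ.ne',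
        sub_add_eq_add_sub, sub_le_sub_iff_right]
    _ ↔ 1 / (2 * γ) * ‖x - z - γ • p‖ ^ 2 ≤ ε := by
      refine ⟨fun h ↦ ?_, fun h w ↦ h.trans (le_add_of_nonneg_left (by positivity))⟩
      simpa using h (z + γ • p)
    _ ↔ ‖x - z - γ • p‖ ^ 2 ≤ 2 * γ * ε := by
      rw [one_div, inv_mul_le_iff₀ (by positivity)]

theorem eps_subdifferential_of_quadratic_general (z : E) {γ : ℝ} (hγ : 0 < γ) {ε : ℝ} (hε : 0 ≤ ε)
    (x : E) :
    epsSubdifferential (fun w ↦ 1 / (2 * γ) * ‖w - z‖ ^ 2) ε x =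
      {p | ∃ r, ‖r‖ ≤ √(2 * γ * ε) ∧ p = (1 / γ) • (x - z - r)} := by
  ext p
  have residual_eq_iff (r : E) : p = (1 / γ) • (x - z - r) ↔ r = x - z - γ • p := by
    rw [one_div, eq_inv_smul_iff₀ hγ.ne', eq_sub_iff_add_eq, ← eq_sub_iff_add_eq']
  simp only [Set.mem_ofPred_eq, residual_eq_iff, exists_eq_right]
  rw [mem_epsSubdifferential_quadratic_iff hγ, Real.le_sqrt (norm_nonneg _) (by positivity)]

end EpsSubdifferential

/-- ε-subdifferential of the quadratic G(x) = ‖x - z‖²/(2γ) (Example 2.2 of the paper). -/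
theorem eps_subdifferential_of_quadratic
    {E : Type*} [NormedAddCommGroup E] [InnerProductSpace ℝ E]
    (z : E) (γ : ℝ) (hγ : 0 < γ) (ε : ℝ) (hε : 0 ≤ ε) (x : E) :
    {p : E | ∀ w : E,
        1 / (2 * γ) * ‖w - z‖ ^ 2
          ≥ 1 / (2 * γ) * ‖x - z‖ ^ 2 + ⟪p, w - x⟫ - ε}
      = {p : E | ∃ r : E, ‖r‖ ≤ Real.sqrt (2 * γ * ε) ∧ p = (1 / γ) • (x - z - r)} :=
  eps_subdifferential_of_quadratic_general z hγ hε x
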